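/- arXiv:2510.22259 — 3 statements merged into one kernel-verified Lean document; each statement's English description precedes it below -/
import Mathlib

section
/- Let s ≥ 4 and set w1 = (2^{2s−1} + (−1)^s·2^s)/3 and w2 = (2^{2s−1} − (−1)^s·2^{s−1})/3. The dual code C_{(2,n,3,1)}^⊥, where n = (4^s−1)/3, has dimension 2s and minimum distance min{w1, w2}; moreover it contains exactly n codewords of Hamming weight w1, exactly 2n codewords of Hamming weight w2, the zero codeword, and no codewords of any other weight. -/
open Finset

/-- The binary cyclic (BCH-type) code of length `n` over GF(2), consisting of all
words `c` such that `∑ i, c i • β ^ (j * i) = 0` for every `j` in the check set `J`. -/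
def BCHCode {F : Type} [Field F] [Algebra (ZMod 2) F] (n : ℕ) (β : F) (J : Finset ℕ) :
    Submodule (ZMod 2) (Fin n → ZMod 2) where
  carrier := {c | ∀ j ∈ J, ∑ i : Fin n, c i • β ^ (j * (i : ℕ)) = 0}
  add_mem' := by
    intro a b ha hb j hj
    simp only [Set.mem_setOf_eq, Pi.add_apply, add_smul, Finset.sum_add_distrib] at *
    rw [ha j hj, hb j hj, add_zero]
  zero_mem' := by
    intro j hj
    simp
  smul_mem' := by
    intro r c hc j hj
    simp only [Set.mem_setOf_eq, Pi.smul_apply, smul_assoc, ← Finset.smul_sum] at *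
    rw [hc j hj, smul_zero]

/-- The (Euclidean) dual of a binary linear code. -/
def dualCode {N : ℕ} (C : Submodule (ZMod 2) (Fin N → ZMod 2)) :
    Submodule (ZMod 2) (Fin N → ZMod 2) where
  carrier := {b | ∀ c ∈ C, ∑ i, b i * c i = 0}
  add_mem' := by
    intro a b ha hb c hc
    simp only [Set.mem_setOf_eq, Pi.add_apply, add_mul, Finset.sum_add_distrib] at *
    rw [ha c hc, hb c hc, add_zero]
  zero_mem' := by
    intro c hc
    simp
  smul_mem' := by
    intro r b hb c hc
    simp only [Set.mem_setOf_eq, Pi.smul_apply, smul_eq_mul, mul_assoc, ← Finset.mul_sum] at *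
    rw [hb c hc, mul_zero]

/-- The linear map appending an overall parity-check coordinate. -/
def extendMap (N : ℕ) : (Fin N → ZMod 2) →ₗ[ZMod 2] (Fin (N + 1) → ZMod 2) where
  toFun c := fun j => if h : (j : ℕ) < N then c ⟨j, h⟩ else ∑ i, c i
  map_add' a b := by
    funext j
    by_cases h : (j : ℕ) < N <;> simp [h, Finset.sum_add_distrib]
  map_smul' r c := by
    funext j
    by_cases h : (j : ℕ) < N <;> simp [h, Finset.mul_sum]

/-- The extended code of a binary linear code. -/
def extendedCode {N : ℕ} (C : Submodule (ZMod 2) (Fin N → ZMod 2)) :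
    Submodule (ZMod 2) (Fin (N + 1) → ZMod 2) :=
  C.map (extendMap N)

/-- The minimum distance (= minimum nonzero Hamming weight) of a binary linear code. -/
noncomputable def minDist {N : ℕ} (C : Submodule (ZMod 2) (Fin N → ZMod 2)) : ℕ :=
  sInf {w | ∃ c ∈ C, c ≠ 0 ∧ hammingNorm c = w}

/-- The number of codewords of Hamming weight `w` in a binary linear code. -/
noncomputable def weightCount {N : ℕ} (C : Submodule (ZMod 2) (Fin N → ZMod 2)) (w : ℕ) : ℕ :=
  Set.ncard {c : Fin N → ZMod 2 | c ∈ C ∧ hammingNorm c = w}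

/-- The 2-cyclotomic coset of `i` modulo `n`. -/
def cycCoset (n i : ℕ) : Set ℕ := {x | ∃ j : ℕ, x = i * 2 ^ j % n}

/-- The coset leader (smallest element) of the 2-cyclotomic coset of `i` modulo `n`. -/
noncomputable def cosetLeader (n i : ℕ) : ℕ := sInf (cycCoset n i)

/-!
Write `q = 4 ^ s = 3 n + 1`. By Delsarte's theorem the codewords of the dual code are the words
`(Tr (a βⁱ))ᵢ` with `a ∈ 𝔽_q`. The powers `βⁱ` are the nonzero cubes, each hit by three elements
under `x ↦ x³`, so the weight of this word is an affine function of the exponential sum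
`S a = ∑ x, (-1) ^ Tr (a x³)`. Expanding `S a ^ 2`, the cubic part can be removed because
`Tr (y²) = Tr y`, and what remains counts the solutions of `a z³ = 1`: `S a ^ 2 = 4 q` if `a` is a
nonzero cube and `S a ^ 2 = q` if `a` is not a cube. Finally `S a ≡ 1 (mod 3)`, again because
`x ↦ x³` is three-to-one away from zero, and this fixes the sign: `S a` is `(-2) ^ (s + 1)`
or `(-2) ^ s`. Hence exactly two nonzero weights occur, the first one `n` times.
-/

section RootsOfUnity

lemma sum_nthRootsFinset_one {R M : Type*} [CommRing R] [IsDomain R] [AddCommMonoid M] {n : ℕ}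
    {β : R} (hβ : IsPrimitiveRoot β n) (f : R → M) :
    ∑ y ∈ Polynomial.nthRootsFinset n (1 : R), f y = ∑ i : Fin n, f (β ^ (i : ℕ)) := by
  rcases n.eq_zero_or_pos with rfl | hn
  · simp
  have : NeZero n := ⟨hn.ne'⟩
  rw [Fin.sum_univ_eq_sum_range fun i => f (β ^ i)]
  refine (sum_nbij (β ^ ·) (fun i _ => ?_) hβ.injOn_pow (fun y hy => ?_) fun _ _ => rfl).symm
  · rw [Polynomial.mem_nthRootsFinset hn, pow_right_comm, hβ.pow_eq_one, one_pow]
  · obtain ⟨i, hi, rfl⟩ := hβ.eq_pow_of_pow_eq_one ((Polynomial.mem_nthRootsFinset hn 1).mp hy)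
    exact ⟨i, mem_coe.mpr (mem_range.mpr hi), rfl⟩

end RootsOfUnity

section PowerMap

variable {F : Type*} [Field F] [Fintype F] {m n : ℕ}

lemma exists_isPrimitiveRoot_of_card_eq (hF : Fintype.card F = m * n + 1) :
    ∃ ζ : F, IsPrimitiveRoot ζ (m * n) := by
  obtain ⟨u, hu⟩ := IsCyclic.exists_ofOrder_eq_natCard (α := Fˣ)
  refine ⟨u, IsPrimitiveRoot.coe_units_iff.mpr (IsPrimitiveRoot.iff_orderOf.mpr ?_)⟩
  rw [hu, Nat.card_units, Nat.card_eq_fintype_card, hF, Nat.add_sub_cancel]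

lemma mul_pos_of_card_eq (hF : Fintype.card F = m * n + 1) : 0 < m * n := by
  have := Fintype.one_lt_card (α := F)
  omega

lemma pow_pow_eq_one_of_card_eq (hF : Fintype.card F = m * n + 1) {x : F} (hx : x ≠ 0) :
    (x ^ m) ^ n = 1 := by
  rw [← pow_mul, ← FiniteField.pow_card_sub_one_eq_one x hx, hF, Nat.add_sub_cancel]

lemma card_filter_pow_eq [DecidableEq F] (hF : Fintype.card F = m * n + 1) {y : F}
    (hy : y ^ n = 1) :
    #{x : F | x ^ m = y} = m := by
  have hmn := mul_pos_of_card_eq hF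
  have hm : 0 < m := Nat.pos_of_mul_pos_right hmn
  have : NeZero n := ⟨(Nat.pos_of_mul_pos_left hmn).ne'⟩
  obtain ⟨ζ, hζ⟩ := exists_isPrimitiveRoot_of_card_eq hF
  obtain ⟨i, -, hi⟩ := (hζ.pow hmn rfl).eq_pow_of_pow_eq_one hy
  have hζn : IsPrimitiveRoot (ζ ^ n) m := hζ.pow hmn (mul_comm m n)
  have hy0 : y ≠ 0 := by
    rintro rfl
    simp [NeZero.ne n] at hy
  have hfilter : ({x : F | x ^ m = y} : Finset F) = (Polynomial.nthRoots m y).toFinset := by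
    ext x
    simp [Polynomial.mem_nthRoots hm]
  rw [hfilter, Multiset.toFinset_card_of_nodup (hζn.nthRoots_nodup hy0), hζn.card_nthRoots,
    if_pos ⟨ζ ^ i, by rw [← hi, pow_right_comm]⟩]

lemma sum_comp_pow {M : Type*} [AddCommMonoid M] (hF : Fintype.card F = m * n + 1) (f : F → M) :
    ∑ x, f (x ^ m) = f 0 + m • ∑ y ∈ Polynomial.nthRootsFinset n (1 : F), f y := by
  classical
  have hmn := mul_pos_of_card_eq hF
  have hm : m ≠ 0 := (Nat.pos_of_mul_pos_right hmn).ne'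
  have hn : 0 < n := Nat.pos_of_mul_pos_left hmn
  have hmem {y : F} : y ∈ Polynomial.nthRootsFinset n (1 : F) ↔ y ^ n = 1 :=
    Polynomial.mem_nthRootsFinset hn 1
  have hfiber (y : F) (hy : y ^ n = 1) : #{x ∈ univ.erase 0 | x ^ m = y} = m := by
    rw [filter_erase, erase_eq_of_notMem, card_filter_pow_eq hF hy]
    simp only [mem_filter_univ, zero_pow hm]
    rintro rfl
    simp [hn.ne'] at hy
  rw [← add_sum_erase univ _ (mem_univ 0), zero_pow hm,
    ← sum_fiberwise_of_maps_to (g := (· ^ m)) (t := Polynomial.nthRootsFinset n (1 : F))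
      fun x hx => hmem.mpr (pow_pow_eq_one_of_card_eq hF (ne_of_mem_erase hx)), smul_sum]
  congr 1
  refine sum_congr rfl fun y hy => ?_
  rw [sum_congr rfl fun x hx => congrArg f (mem_filter.mp hx).2, sum_const, hfiber y (hmem.mp hy)]

end PowerMap

section CubicSum

variable {F R : Type*} [Field F] [Fintype F] [CommRing R]

/-- The cubic exponential sum `∑ x, ψ (a x³)` of an additive character `ψ`. Over the field with
`4 ^ s` elements it determines the weight of the codeword of the dual code attached to `a`. -/
def cubicSum (ψ : AddChar F R) (a : F) : R := ∑ x, ψ (a * x ^ 3)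

variable [IsDomain R] {ψ : AddChar F R}

lemma sum_mulShift_pow_char [DecidableEq F] (p : ℕ) [ExpChar F p] (hψ : ψ ≠ 1) (c : F) :
    ∑ x, ψ (c * x ^ p) = if c = 0 then (Fintype.card F : R) else 0 := by
  rw [← Nat.cast_zero (R := R), ← Nat.cast_ite,
    ← AddChar.sum_mulShift c (AddChar.IsPrimitive.of_ne_one hψ),
    ← (frobeniusEquiv F p).toEquiv.sum_comp fun y => ψ (y * c)]
  simp [frobenius_def, mul_comm c]

/- Substituting `x + z` for the second variable of the double sum `cubicSum ψ a ^ 2` cancels the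
cubes of `x`; as `ψ` is invariant under squaring, the remaining terms in `x` combine to the
additive polynomial `(a z + a² z⁴) x²`. -/
lemma cubicSum_sq [DecidableEq F] [CharP F 2] (hψ : ψ ≠ 1) (hfrob : ∀ x, ψ (x ^ 2) = ψ x) {a : F}
    (ha : a ≠ 0) :
    cubicSum ψ a ^ 2 = Fintype.card F * (1 + #{z : F | a * z ^ 3 = 1} * ψ 1) := by
  have htwo : (2 : F) = 0 := CharTwo.two_eq_zero
  have hshift (x z : F) : ψ (a * x ^ 3) * ψ (a * (x + z) ^ 3) =
      ψ (a * z ^ 3) * ψ ((a * z + a ^ 2 * z ^ 4) * x ^ 2) := by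
    calc ψ (a * x ^ 3) * ψ (a * (x + z) ^ 3)
      _ = ψ (a * z ^ 3 + a * z * x ^ 2 + a * x * z ^ 2) := by
        rw [← AddChar.map_add_eq_mul]
        congr 1
        linear_combination (a * x ^ 3 + a * x ^ 2 * z + a * x * z ^ 2) * htwo
      _ = ψ (a * z ^ 3 + a * z * x ^ 2) * ψ ((a * x * z ^ 2) ^ 2) := by
        rw [hfrob, AddChar.map_add_eq_mul]
      _ = ψ (a * z ^ 3) * ψ ((a * z + a ^ 2 * z ^ 4) * x ^ 2) := by
        rw [← AddChar.map_add_eq_mul, ← AddChar.map_add_eq_mul]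
        ring_nf
  have hroot (z : F) : a * z + a ^ 2 * z ^ 4 = 0 ↔ z = 0 ∨ a * z ^ 3 = 1 := by
    rw [show a * z + a ^ 2 * z ^ 4 = a * z * (a * z ^ 3 - 1) by
      linear_combination a * z * htwo]
    simp [ha, sub_eq_zero]
  have hterm (z : F) : ψ (a * z ^ 3) *
      (if a * z + a ^ 2 * z ^ 4 = 0 then (Fintype.card F : R) else 0) =
      Fintype.card F * ((if z = 0 then 1 else 0) + (if a * z ^ 3 = 1 then 1 else 0) * ψ 1) := by
    rcases eq_or_ne z 0 with rfl | hz
    · simp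
    · by_cases hz3 : a * z ^ 3 = 1 <;> simp [hroot, hz, hz3, mul_comm]
  calc cubicSum ψ a ^ 2
    _ = ∑ x, ∑ z, ψ (a * x ^ 3) * ψ (a * (x + z) ^ 3) := by
      rw [sq, cubicSum, sum_mul_sum]
      exact sum_congr rfl fun x _ => (Equiv.sum_comp (Equiv.addLeft x) _).symm
    _ = ∑ z, ψ (a * z ^ 3) * ∑ x, ψ ((a * z + a ^ 2 * z ^ 4) * x ^ 2) := by
      simp only [hshift, mul_sum]
      exact sum_comm
    _ = Fintype.card F * (1 + #{z : F | a * z ^ 3 = 1} * ψ 1) := by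
      simp only [sum_mulShift_pow_char 2 hψ, hterm]
      rw [← mul_sum, sum_add_distrib, ← sum_mul, Fintype.sum_ite_eq' 0 fun _ => (1 : R), sum_boole]

variable [CharP F 2] {n : ℕ} {a : F}

lemma cubicSum_sq_of_pow_eq_one (hF : Fintype.card F = 3 * n + 1) (hψ : ψ ≠ 1)
    (hfrob : ∀ x, ψ (x ^ 2) = ψ x) (ha : a ^ n = 1) :
    cubicSum ψ a ^ 2 = Fintype.card F * (1 + 3 * ψ 1) := by
  classical
  have ha0 : a ≠ 0 := by
    rintro rfl
    have := mul_pos_of_card_eq hF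
    rw [zero_pow (by omega)] at ha
    exact zero_ne_one ha
  have hcount : #{z : F | a * z ^ 3 = 1} = 3 := by
    simp only [mul_comm a, mul_eq_one_iff_eq_inv₀ ha0]
    exact card_filter_pow_eq hF (by rw [inv_pow, ha, inv_one])
  rw [cubicSum_sq hψ hfrob ha0, hcount, Nat.cast_ofNat]

lemma cubicSum_sq_of_pow_ne_one (hF : Fintype.card F = 3 * n + 1) (hψ : ψ ≠ 1)
    (hfrob : ∀ x, ψ (x ^ 2) = ψ x) (ha0 : a ≠ 0) (ha : a ^ n ≠ 1) :
    cubicSum ψ a ^ 2 = Fintype.card F := by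
  classical
  have hcount : #{z : F | a * z ^ 3 = 1} = 0 := by
    refine card_filter_eq_zero_iff.mpr fun z _ hz => ha ?_
    have hz0 : z ≠ 0 := by
      rintro rfl
      simp at hz
    rw [eq_inv_of_mul_eq_one_left hz, inv_pow, pow_pow_eq_one_of_card_eq hF hz0, inv_one]
  rw [cubicSum_sq hψ hfrob ha0, hcount, Nat.cast_zero, zero_mul, add_zero, mul_one]

end CubicSum

section TraceCharacter

lemma trace_pow_card (K : Type*) {L : Type*} [Field K] [Fintype K] [Field L] [Finite L]
    [Algebra K L] (x : L) :
    Algebra.trace K L (x ^ Fintype.card K) = Algebra.trace K L x :=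
  Algebra.trace_eq_of_algEquiv (FiniteField.frobeniusAlgEquivOfAlgebraic K L) x

/-- The nontrivial additive character of `𝔽₂`, with values `±1`. -/
def signChar : AddChar (ZMod 2) ℤ := AddChar.zmodChar 2 (by norm_num : (-1 : ℤ) ^ 2 = 1)

variable {F : Type*} [Field F] [Algebra (ZMod 2) F]

variable (F) in
/-- The canonical additive character `x ↦ (-1) ^ Tr x` of an extension of `𝔽₂`. -/
noncomputable def traceChar : AddChar F ℤ :=
  signChar.compAddMonoidHom (Algebra.trace (ZMod 2) F).toAddMonoidHom

lemma traceChar_apply (x : F) : traceChar F x = signChar (Algebra.trace (ZMod 2) F x) := rfl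

lemma traceChar_ne_one [Finite F] : traceChar F ≠ 1 := by
  obtain ⟨y, hy⟩ := Algebra.trace_surjective (ZMod 2) F 1
  refine AddChar.ne_one_iff.mpr ⟨y, ?_⟩
  rw [traceChar_apply, hy]
  decide

lemma traceChar_sq [Finite F] (x : F) : traceChar F (x ^ 2) = traceChar F x := by
  rw [traceChar_apply, traceChar_apply, ← trace_pow_card (ZMod 2) x, ZMod.card]

lemma traceChar_one (h : Even (Module.finrank (ZMod 2) F)) : traceChar F 1 = 1 := by
  rw [traceChar_apply, ← map_one (algebraMap (ZMod 2) F), Algebra.trace_algebraMap, nsmul_one,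
    (ZMod.natCast_eq_zero_iff_even).mpr h, AddChar.map_zero_eq_one]

end TraceCharacter

section CubicSumTrace

lemma eq_neg_two_pow_of_sq_eq {k : ℕ} {S : ℤ} (hsq : S ^ 2 = 4 ^ k) (hmod : S ≡ 1 [ZMOD 3]) :
    S = (-2) ^ k := by
  have hpow : (-2 : ℤ) ^ k ≡ 1 [ZMOD 3] := by
    simpa using (show (-2 : ℤ) ≡ 1 [ZMOD 3] by decide).pow k
  have hsq' : S ^ 2 = ((-2) ^ k) ^ 2 := by
    rw [hsq, pow_right_comm]
    norm_num
  rcases sq_eq_sq_iff_eq_or_eq_neg.mp hsq' with h | h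
  · exact h
  · have hneg : (-1 : ℤ) ≡ 1 [ZMOD 3] := hpow.neg.symm.trans (h ▸ hmod)
    exact absurd hneg (by decide)

variable {F : Type*} [Field F] [Fintype F] {n : ℕ}

lemma cubicSum_modEq_one (hF : Fintype.card F = 3 * n + 1) (ψ : AddChar F ℤ) (a : F) :
    cubicSum ψ a ≡ 1 [ZMOD 3] := by
  rw [cubicSum, sum_comp_pow hF fun y => ψ (a * y), mul_zero, AddChar.map_zero_eq_one,
    nsmul_eq_mul]
  exact Int.modEq_iff_dvd.mpr ⟨-∑ y ∈ Polynomial.nthRootsFinset n (1 : F), ψ (a * y), by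
    push_cast; ring⟩

variable [Algebra (ZMod 2) F] {s : ℕ} {a : F}

lemma finrank_eq_two_mul (hF : Fintype.card F = 4 ^ s) : Module.finrank (ZMod 2) F = 2 * s := by
  have h := Module.card_eq_pow_finrank (K := ZMod 2) (V := F)
  rw [hF, ZMod.card, show 4 = 2 ^ 2 by rfl, ← pow_mul] at h
  exact (Nat.pow_right_injective le_rfl h).symm

lemma cubicSum_traceChar_of_pow_eq_one (hF : Fintype.card F = 4 ^ s) (hn : 4 ^ s = 3 * n + 1)
    (ha : a ^ n = 1) : cubicSum (traceChar F) a = (-2) ^ (s + 1) := by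
  have : CharP F 2 := charP_of_injective_algebraMap' (ZMod 2) 2
  have hone : traceChar F 1 = 1 := traceChar_one (finrank_eq_two_mul hF ▸ even_two_mul s)
  refine eq_neg_two_pow_of_sq_eq ?_ (cubicSum_modEq_one (hF.trans hn) _ a)
  rw [cubicSum_sq_of_pow_eq_one (hF.trans hn) traceChar_ne_one traceChar_sq ha, hone, hF]
  push_cast
  ring

lemma cubicSum_traceChar_of_pow_ne_one (hF : Fintype.card F = 4 ^ s) (hn : 4 ^ s = 3 * n + 1)
    (ha0 : a ≠ 0) (ha : a ^ n ≠ 1) : cubicSum (traceChar F) a = (-2) ^ s := by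
  have : CharP F 2 := charP_of_injective_algebraMap' (ZMod 2) 2
  refine eq_neg_two_pow_of_sq_eq ?_ (cubicSum_modEq_one (hF.trans hn) _ a)
  rw [cubicSum_sq_of_pow_ne_one (hF.trans hn) traceChar_ne_one traceChar_sq ha0 ha, hF]
  push_cast
  rfl

end CubicSumTrace

section TraceCode

variable {F : Type*} [Field F] [Algebra (ZMod 2) F] {n : ℕ}

/-- The trace parametrisation `a ↦ (Tr (a vᵢ))ᵢ` of the binary code dual to the one with parity
check vector `v`. -/
noncomputable def traceWord (v : Fin n → F) : F →ₗ[ZMod 2] Fin n → ZMod 2 :=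
  LinearMap.pi fun i => (Algebra.traceForm (ZMod 2) F).flip (v i)

lemma traceWord_apply (v : Fin n → F) (a : F) (i : Fin n) :
    traceWord v a i = Algebra.trace (ZMod 2) F (a * v i) := rfl

lemma sum_traceWord_mul (v : Fin n → F) (a : F) (c : Fin n → ZMod 2) :
    ∑ i, traceWord v a i * c i =
      Algebra.trace (ZMod 2) F (a * Fintype.linearCombination (ZMod 2) v c) := by
  simp_rw [Fintype.linearCombination_apply, mul_sum, map_sum, traceWord_apply, mul_smul_comm,
    map_smul, smul_eq_mul, mul_comm]

lemma exists_eq_trace_mul [Finite F] (φ : Module.Dual (ZMod 2) F) :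
    ∃ a, ∀ x, φ x = Algebra.trace (ZMod 2) F (a * x) :=
  have hnd := traceForm_nondegenerate (ZMod 2) F
  ⟨((Algebra.traceForm (ZMod 2) F).toDual hnd).symm φ, fun x =>
    (LinearMap.BilinForm.apply_toDual_symm_apply (hB := hnd) φ x).symm⟩

/- Delsarte's theorem: a functional vanishing on the kernel of the parity check factors through it,
and every functional on `F` is of the form `x ↦ Tr (a x)`. -/
lemma dualCode_ker_linearCombination [Finite F] (v : Fin n → F) :
    dualCode (LinearMap.ker (Fintype.linearCombination (ZMod 2) v)) =
      LinearMap.range (traceWord v) := by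
  apply le_antisymm
  · intro b hb
    have hvanish : Fintype.linearCombination (ZMod 2) b ∈
        (LinearMap.ker (Fintype.linearCombination (ZMod 2) v)).dualAnnihilator := by
      refine (Submodule.mem_dualAnnihilator _).mpr fun c hc => ?_
      simpa only [Fintype.linearCombination_apply, smul_eq_mul, mul_comm] using hb c hc
    rw [← LinearMap.range_dualMap_eq_dualAnnihilator_ker] at hvanish
    obtain ⟨φ, hφ⟩ := hvanish
    obtain ⟨a, ha⟩ := exists_eq_trace_mul φ
    refine ⟨a, funext fun i => ?_⟩
    have hφi := LinearMap.congr_fun hφ (Pi.single i 1)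
    rw [LinearMap.dualMap_apply, Fintype.linearCombination_apply_single,
      Fintype.linearCombination_apply_single, one_smul, one_smul] at hφi
    rw [traceWord_apply, ← ha, hφi]
  · rintro _ ⟨a, rfl⟩ c hc
    rw [sum_traceWord_mul, LinearMap.mem_ker.mp hc, mul_zero, map_zero]

lemma BCHCode_singleton {F : Type} [Field F] [Algebra (ZMod 2) F] (β : F) (j : ℕ) :
    BCHCode n β {j} =
      LinearMap.ker (Fintype.linearCombination (ZMod 2) fun i : Fin n => β ^ (j * (i : ℕ))) := by
  ext c
  change (∀ k ∈ ({j} : Finset ℕ), ∑ i : Fin n, c i • β ^ (k * (i : ℕ)) = 0) ↔ _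
  simp [Fintype.linearCombination_apply]

lemma dualCode_BCHCode_singleton {F : Type} [Field F] [Finite F] [Algebra (ZMod 2) F] (β : F)
    (j : ℕ) : dualCode (BCHCode n β {j}) =
      LinearMap.range (traceWord fun i : Fin n => β ^ (j * (i : ℕ))) := by
  rw [BCHCode_singleton, dualCode_ker_linearCombination]

lemma sum_signChar (b : Fin n → ZMod 2) : ∑ i, signChar (b i) = n - 2 * (hammingNorm b : ℤ) := by
  have hsign : ∀ t : ZMod 2, signChar t = 1 - 2 * if t ≠ 0 then 1 else 0 := by decide
  simp_rw [hsign, sum_sub_distrib, ← mul_sum, sum_boole, hammingNorm]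
  simp

lemma six_mul_hammingNorm_traceWord [Fintype F] (hF : Fintype.card F = 3 * n + 1) {β : F}
    (hβ : IsPrimitiveRoot β n) (a : F) :
    6 * (hammingNorm (traceWord (fun i : Fin n => β ^ (i : ℕ)) a) : ℤ) =
      Fintype.card F - cubicSum (traceChar F) a := by
  have hsum := sum_signChar (traceWord (fun i : Fin n => β ^ (i : ℕ)) a)
  rw [cubicSum, sum_comp_pow hF fun y => traceChar F (a * y), mul_zero, AddChar.map_zero_eq_one,
    sum_nthRootsFinset_one hβ]
  simp only [traceWord_apply] at hsum
  simp only [traceChar_apply, hsum, hF]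
  push_cast
  ring

end TraceCode

section WeightDistribution

lemma weightCount_zero {N : ℕ} (C : Submodule (ZMod 2) (Fin N → ZMod 2)) :
    weightCount C 0 = 1 := by
  have : {c | c ∈ C ∧ hammingNorm c = 0} = {0} := by
    ext c
    simp +contextual [hammingNorm_eq_zero]
  rw [weightCount, this, Set.ncard_singleton]

lemma weightCount_ne_zero_iff {N : ℕ} {C : Submodule (ZMod 2) (Fin N → ZMod 2)} {w : ℕ} :
    weightCount C w ≠ 0 ↔ ∃ c ∈ C, hammingNorm c = w :=
  Nat.pos_iff_ne_zero.symm.trans (Set.ncard_pos (Set.toFinite _))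

lemma minDist_eq_sInf_weightCount {N : ℕ} (C : Submodule (ZMod 2) (Fin N → ZMod 2)) :
    minDist C = sInf {w | w ≠ 0 ∧ weightCount C w ≠ 0} := by
  rw [minDist]
  congr 1
  ext w
  simp only [Set.mem_ofPred_eq, weightCount_ne_zero_iff]
  constructor
  · rintro ⟨c, hc, hc0, rfl⟩
    exact ⟨hammingNorm_ne_zero_iff.mpr hc0, c, hc, rfl⟩
  · rintro ⟨hw, c, hc, rfl⟩
    exact ⟨c, hc, hammingNorm_ne_zero_iff.mp hw, rfl⟩

lemma minDist_eq_min {N : ℕ} {C : Submodule (ZMod 2) (Fin N → ZMod 2)} {w₁ w₂ : ℕ} (hw₁ : w₁ ≠ 0)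
    (hw₂ : w₂ ≠ 0) (h₁ : weightCount C w₁ ≠ 0) (h₂ : weightCount C w₂ ≠ 0)
    (h : ∀ w, w ≠ 0 → w ≠ w₁ → w ≠ w₂ → weightCount C w = 0) : minDist C = min w₁ w₂ := by
  have hset : {w | w ≠ 0 ∧ weightCount C w ≠ 0} = {w₁, w₂} := by
    ext w
    grind
  rw [minDist_eq_sInf_weightCount, hset, csInf_pair]

lemma weightCount_range {N : ℕ} {V : Type*} [AddCommGroup V] [Module (ZMod 2) V] [Fintype V]
    {T : V →ₗ[ZMod 2] Fin N → ZMod 2} (hT : Function.Injective T) (w : ℕ) :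
    weightCount (LinearMap.range T) w = #{a | hammingNorm (T a) = w} := by
  rw [weightCount, ← Set.ncard_coe_finset, ← Set.ncard_image_of_injective _ hT]
  congr 1
  ext c
  simp only [coe_filter_univ]
  constructor
  · rintro ⟨⟨a, rfl⟩, ha⟩
    exact ⟨a, ha, rfl⟩
  · rintro ⟨a, ha, rfl⟩
    exact ⟨⟨a, rfl⟩, ha⟩

variable {N : ℕ} {V : Type*} [AddCommGroup V] [Module (ZMod 2) V] [DecidableEq V]
  {T : V →ₗ[ZMod 2] Fin N → ZMod 2} {S : Finset V} {w₁ w₂ : ℕ}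

lemma weightCount_range_of_ne (hT : ∀ a ≠ 0, hammingNorm (T a) = if a ∈ S then w₁ else w₂) {w : ℕ}
    (hw : w ≠ 0) (h₁ : w ≠ w₁) (h₂ : w ≠ w₂) : weightCount (LinearMap.range T) w = 0 := by
  by_contra hcount
  obtain ⟨_, ⟨a, rfl⟩, rfl⟩ := weightCount_ne_zero_iff.mp hcount
  have ha : a ≠ 0 := by
    rintro rfl
    simp at hw
  have := hT a ha
  split_ifs at this <;> contradiction

lemma injective_of_hammingNorm_eq_ite (hw₁ : w₁ ≠ 0) (hw₂ : w₂ ≠ 0)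
    (hT : ∀ a ≠ 0, hammingNorm (T a) = if a ∈ S then w₁ else w₂) : Function.Injective T := by
  refine (injective_iff_map_eq_zero T).mpr fun a ha => by_contra fun ha0 => ?_
  have := hT a ha0
  rw [ha, hammingNorm_zero] at this
  split_ifs at this <;> omega

lemma weightCount_range_fst (hw₁ : w₁ ≠ 0) (hw₂ : w₂ ≠ 0) (hne : w₁ ≠ w₂) (hS : 0 ∉ S)
    (hT : ∀ a ≠ 0, hammingNorm (T a) = if a ∈ S then w₁ else w₂) :
    weightCount (LinearMap.range T) w₁ = #S := by
  have hinj := injective_of_hammingNorm_eq_ite hw₁ hw₂ hT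
  have := Fintype.ofInjective T hinj
  rw [weightCount_range hinj]
  congr 1
  ext a
  rw [mem_filter_univ]
  rcases eq_or_ne a 0 with rfl | ha
  · simp [hS, hw₁.symm]
  · simp [hT a ha, hne.symm]

variable [Fintype V]

lemma weightCount_range_snd (hw₁ : w₁ ≠ 0) (hw₂ : w₂ ≠ 0) (hne : w₁ ≠ w₂) (hS : 0 ∉ S)
    (hT : ∀ a ≠ 0, hammingNorm (T a) = if a ∈ S then w₁ else w₂) :
    weightCount (LinearMap.range T) w₂ = Fintype.card V - (#S + 1) := by
  rw [weightCount_range (injective_of_hammingNorm_eq_ite hw₁ hw₂ hT), ← card_insert_of_notMem hS,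
    ← card_compl]
  congr 1
  ext a
  rw [mem_filter_univ, mem_compl, mem_insert, not_or]
  rcases eq_or_ne a 0 with rfl | ha
  · simp [hw₂.symm]
  · simp [hT a ha, ha, hne]

lemma minDist_range_eq_min (hw₁ : w₁ ≠ 0) (hw₂ : w₂ ≠ 0) (hne : w₁ ≠ w₂) (hS : 0 ∉ S)
    (hT : ∀ a ≠ 0, hammingNorm (T a) = if a ∈ S then w₁ else w₂) (hS₀ : S.Nonempty)
    (hcard : #S + 1 < Fintype.card V) : minDist (LinearMap.range T) = min w₁ w₂ := by
  apply minDist_eq_min hw₁ hw₂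
  · rw [weightCount_range_fst hw₁ hw₂ hne hS hT]
    exact hS₀.card_ne_zero
  · rw [weightCount_range_snd hw₁ hw₂ hne hS hT]
    omega
  · exact fun w => weightCount_range_of_ne hT

end WeightDistribution

section Weights

lemma four_pow_sub_one_eq (s : ℕ) : 4 ^ s - 1 = 3 * ((4 ^ s - 1) / 3) := by
  have hdvd : 3 ∣ 4 ^ s - 1 := by simpa only [one_pow] using Nat.sub_dvd_pow_sub_pow 4 1 s
  exact (Nat.mul_div_cancel' hdvd).symm

lemma isPrimitiveRoot_pow_three {M : Type*} [CommMonoid M] {s : ℕ} (hs : s ≠ 0) {α : M}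
    (hα : orderOf α = 2 ^ (2 * s) - 1) : IsPrimitiveRoot (α ^ 3) ((4 ^ s - 1) / 3) := by
  have hpos : 0 < 2 ^ (2 * s) - 1 := Nat.sub_pos_of_lt (Nat.one_lt_two_pow (by omega))
  refine (IsPrimitiveRoot.iff_orderOf.mpr hα).pow hpos ?_
  rw [← four_pow_sub_one_eq, pow_mul]
  rfl

lemma weights_ne {s w₁ w₂ : ℕ} (hs : 2 ≤ s) (hw₁ : (6 * w₁ : ℤ) = 4 ^ s - (-2) ^ (s + 1))
    (hw₂ : (6 * w₂ : ℤ) = 4 ^ s - (-2) ^ s) : w₁ ≠ 0 ∧ w₂ ≠ 0 ∧ w₁ ≠ w₂ := by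
  obtain ⟨x, hx⟩ : ∃ x : ℤ, x = (-2) ^ s := ⟨_, rfl⟩
  have hx4 : 4 ≤ |x| := by
    rw [hx, abs_pow]
    exact pow_le_pow_right₀ (by decide : (1 : ℤ) ≤ |-2|) hs
  have hsq : (4 : ℤ) ^ s = x * x := by
    rw [hx, ← mul_pow]
    norm_num
  rw [hsq, pow_succ, ← hx] at hw₁
  rw [hsq, ← hx] at hw₂
  have hx0 : x ≠ 0 := by
    rintro rfl
    simp at hx4
  refine ⟨?_, ?_, ?_⟩
  · rintro rfl
    have hx2 : x = -2 := mul_left_cancel₀ hx0 (by push_cast at hw₁; linarith)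
    simp [hx2] at hx4
  · rintro rfl
    have hx1 : x = 1 := mul_left_cancel₀ hx0 (by push_cast at hw₂; linarith)
    simp [hx1] at hx4
  · rintro rfl
    exact hx0 (by linarith)

lemma two_mul_two_pow_two_mul_sub_one {s : ℕ} (hs : s ≠ 0) : (2 : ℤ) * 2 ^ (2 * s - 1) = 4 ^ s := by
  rw [mul_pow_sub_one (by omega), pow_mul]
  norm_num

lemma six_mul_eq_four_pow_sub_neg_two_pow_succ {s : ℕ} {w : ℤ} (hs : s ≠ 0)
    (hw : 3 * w = 2 ^ (2 * s - 1) + (-1) ^ s * 2 ^ s) : 6 * w = 4 ^ s - (-2) ^ (s + 1) := by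
  have hsign : (-1 : ℤ) ^ s * 2 ^ s = (-2) ^ s := by
    rw [← mul_pow]
    norm_num
  rw [hsign] at hw
  linear_combination 2 * hw + two_mul_two_pow_two_mul_sub_one hs

lemma six_mul_eq_four_pow_sub_neg_two_pow {s : ℕ} {w : ℤ} (hs : s ≠ 0)
    (hw : 3 * w = 2 ^ (2 * s - 1) - (-1) ^ s * 2 ^ (s - 1)) : 6 * w = 4 ^ s - (-2) ^ s := by
  have hsign : (-1 : ℤ) ^ s * (2 * 2 ^ (s - 1)) = (-2) ^ s := by
    rw [mul_pow_sub_one hs, ← mul_pow]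
    norm_num
  linear_combination 2 * hw + two_mul_two_pow_two_mul_sub_one hs - hsign

lemma hammingNorm_traceWord_eq_ite {F : Type*} [Field F] [Fintype F] [DecidableEq F]
    [Algebra (ZMod 2) F] {s n w₁ w₂ : ℕ} (hF : Fintype.card F = 4 ^ s) (hn : 4 ^ s = 3 * n + 1)
    {β : F} (hβ : IsPrimitiveRoot β n) (hw₁ : (6 * w₁ : ℤ) = 4 ^ s - (-2) ^ (s + 1))
    (hw₂ : (6 * w₂ : ℤ) = 4 ^ s - (-2) ^ s) {a : F} (ha : a ≠ 0) :
    hammingNorm (traceWord (fun i : Fin n => β ^ (i : ℕ)) a) =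
      if a ∈ Polynomial.nthRootsFinset n (1 : F) then w₁ else w₂ := by
  have hn0 : 0 < n := Nat.pos_of_mul_pos_left (mul_pos_of_card_eq (hF.trans hn))
  have hweight := six_mul_hammingNorm_traceWord (hF.trans hn) hβ a
  rw [hF, Nat.cast_pow, Nat.cast_ofNat] at hweight
  split_ifs with han <;> rw [Polynomial.mem_nthRootsFinset hn0] at han
  · rw [cubicSum_traceChar_of_pow_eq_one hF hn han] at hweight
    omega
  · rw [cubicSum_traceChar_of_pow_ne_one hF hn ha han] at hweight
    omega

end Weights

theorem stmt_15_general {F : Type} [Field F] [Finite F] [Algebra (ZMod 2) F] {s n : ℕ}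
    (hs : 2 ≤ s) (hF : Nat.card F = 4 ^ s) (hn : n = (4 ^ s - 1) / 3) {β : F}
    (hβ : IsPrimitiveRoot β n) {w1 w2 : ℕ}
    (hw1 : (3 * w1 : ℤ) = 2 ^ (2 * s - 1) + (-1) ^ s * 2 ^ s)
    (hw2 : (3 * w2 : ℤ) = 2 ^ (2 * s - 1) - (-1) ^ s * 2 ^ (s - 1))
    (D : Submodule (ZMod 2) (Fin n → ZMod 2)) (hD : D = dualCode (BCHCode n β {1})) :
    Module.finrank (ZMod 2) D = 2 * s ∧
    minDist D = min w1 w2 ∧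
    weightCount D w1 = n ∧
    weightCount D w2 = 2 * n ∧
    weightCount D 0 = 1 ∧
    ∀ w : ℕ, w ≠ 0 → w ≠ w1 → w ≠ w2 → weightCount D w = 0 := by
  classical
  cases nonempty_fintype F
  have hs0 : s ≠ 0 := by omega
  have hpow : 4 ^ s = 3 * n + 1 := by
    rw [hn, ← four_pow_sub_one_eq, Nat.sub_add_cancel (Nat.one_le_pow _ _ (by norm_num))]
  have hcard : Fintype.card F = 4 ^ s := Fintype.card_eq_nat_card.trans hF
  have hn0 : 0 < n := Nat.pos_of_mul_pos_left (mul_pos_of_card_eq (hcard.trans hpow))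
  have hw1_six := six_mul_eq_four_pow_sub_neg_two_pow_succ hs0 hw1
  have hw2_six := six_mul_eq_four_pow_sub_neg_two_pow hs0 hw2
  obtain ⟨hw1_ne, hw2_ne, hne⟩ := weights_ne hs hw1_six hw2_six
  have hT (a : F) (ha : a ≠ 0) := hammingNorm_traceWord_eq_ite hcard hpow hβ hw1_six hw2_six ha
  have hS : (0 : F) ∉ Polynomial.nthRootsFinset n (1 : F) := by
    simp [Polynomial.mem_nthRootsFinset hn0, hn0.ne']
  have hScard : #(Polynomial.nthRootsFinset n (1 : F)) = n := hβ.card_nthRootsFinset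
  obtain rfl : D = LinearMap.range (traceWord fun i : Fin n => β ^ (i : ℕ)) := by
    simpa only [one_mul] using hD.trans (dualCode_BCHCode_singleton β 1)
  refine ⟨?_, minDist_range_eq_min hw1_ne hw2_ne hne hS hT (card_pos.mp (by omega)) (by omega),
    (weightCount_range_fst hw1_ne hw2_ne hne hS hT).trans hScard, ?_, weightCount_zero _,
    fun w => weightCount_range_of_ne hT⟩
  · rw [LinearMap.finrank_range_of_inj (injective_of_hammingNorm_eq_ite hw1_ne hw2_ne hT),
      finrank_eq_two_mul hcard]
  · rw [weightCount_range_snd hw1_ne hw2_ne hne hS hT]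
    omega

theorem stmt_15 (s : ℕ) (hs : 4 ≤ s) (n : ℕ) (hn : n = (4 ^ s - 1) / 3)
    (α : GaloisField 2 (2 * s)) (hα : orderOf α = 2 ^ (2 * s) - 1)
    (β : GaloisField 2 (2 * s)) (hβ : β = α ^ (3)) (w1 w2 : ℕ)
    (hw1 : (3 * w1 : ℤ) = 2 ^ (2 * s - 1) + (-1) ^ s * 2 ^ s)
    (hw2 : (3 * w2 : ℤ) = 2 ^ (2 * s - 1) - (-1) ^ s * 2 ^ (s - 1))
    (D : Submodule (ZMod 2) (Fin n → ZMod 2)) (hD : D = dualCode (BCHCode n β {1})) :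
    Module.finrank (ZMod 2) D = 2 * s ∧
    minDist D = min w1 w2 ∧
    weightCount D w1 = n ∧
    weightCount D w2 = 2 * n ∧
    weightCount D 0 = 1 ∧
    ∀ w : ℕ, w ≠ 0 → w ≠ w1 → w ≠ w2 → weightCount D w = 0 :=
  stmt_15_general (by omega) ((GaloisField.card 2 (2 * s) (by omega)).trans (pow_mul 2 2 s))
    hn (hβ ▸ hn ▸ isPrimitiveRoot_pow_three (by omega) hα) hw1 hw2 D hD
end

section
/- Let s ≥ 4 and n = (4^s−1)/3. The code C_{(2,n,5,1)} has dimension n − 4s and minimum distance d with 5 ≤ d ≤ 6; the extended code of C_{(2,n,5,1)} has length n+1, dimension n − 4s, and minimum distance exactly 6; and if moreover s ≥ 5, the extended code is distance-optimal with respect to the sphere packing bound: every binary linear code of length n+1 and dimension n − 4s has minimum distance at most 6. -/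
open Finset

/-!
The sphere-packing inequality `2 ^ r < ∑ w ∈ range 4, n.choose w`, where `r = 2 * [F : 𝔽₂]`, drives
both the dimension and the upper bounds on the distance. It forces `β ^ 3` to have order too large
to lie in a proper subfield, and `β`, `β ^ 3` not to be conjugate: `β ^ 2 ^ k = β ^ 3` would give
`n ^ 2 ≤ 3 * |F|`. The two minimal polynomials are then coprime of full degree, so by the Chinese
remainder theorem the syndrome map `c ↦ (c(β), c(β ^ 3))` is onto `F × F`, and its kernel, the
code, has dimension `n - r`.

Squaring shows that `β ^ 2` and `β ^ 4` are zeros of the code as well, so the Vandermonde argument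
gives minimum distance at least `5`, while balls of radius `3` do not fit around the codewords of
a code of distance `7`. Extending rounds an odd minimum distance up to an even one, and both `5`
and `6` become `6`.
-/

section HammingWeight

variable {ι : Type*} [Fintype ι] {N : ℕ}

lemma ite_ne_zero_one_zero (x : ZMod 2) : (if x ≠ 0 then 1 else 0) = x := by
  decide +revert

lemma sum_eq_natCast_hammingNorm (c : ι → ZMod 2) : ∑ i, c i = (hammingNorm c : ZMod 2) := by
  simp only [hammingNorm, ← Finset.sum_boole, ite_ne_zero_one_zero]

lemma card_filter_hammingNorm_eq [DecidableEq ι] (w : ℕ) :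
    #{c : ι → ZMod 2 | hammingNorm c = w} = (Fintype.card ι).choose w := by
  rw [← Finset.card_univ (α := ι), ← Finset.card_powersetCard]
  refine Finset.card_nbij' (fun c ↦ ({i | c i ≠ 0} : Finset ι)) (fun S i ↦ if i ∈ S then 1 else 0)
    ?_ ?_ ?_ ?_
  · intro c hc
    simpa [hammingNorm, Finset.mem_powersetCard] using hc
  · intro S hS
    simpa [hammingNorm, Finset.mem_powersetCard] using hS
  · intro c _
    funext i
    simpa using ite_ne_zero_one_zero (c i)
  · intro S _
    ext i
    simp

lemma card_filter_hammingNorm_le [DecidableEq ι] (t : ℕ) :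
    #{c : ι → ZMod 2 | hammingNorm c ≤ t} =
      ∑ w ∈ range (t + 1), (Fintype.card ι).choose w := by
  rw [Finset.card_eq_sum_card_fiberwise (f := hammingNorm) (t := range (t + 1))
    (fun c hc ↦ by simpa [Nat.lt_succ_iff] using hc)]
  refine Finset.sum_congr rfl fun w hw ↦ ?_
  rw [← card_filter_hammingNorm_eq, Finset.filter_filter]
  congr 1
  ext c
  have : w ≤ t := by simpa [Nat.lt_succ_iff] using hw
  simp only [Finset.mem_filter_univ]
  lia

lemma extendMap_castSucc (c : Fin N → ZMod 2) (i : Fin N) : extendMap N c i.castSucc = c i := by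
  simp [extendMap]

lemma extendMap_last (c : Fin N → ZMod 2) : extendMap N c (Fin.last N) = ∑ i, c i := by
  simp [extendMap]

lemma extendMap_injective : Function.Injective (extendMap N) := fun a b hab ↦
  funext fun i ↦ by rw [← extendMap_castSucc a, hab, extendMap_castSucc]

lemma hammingNorm_extendMap (c : Fin N → ZMod 2) :
    hammingNorm (extendMap N c) = hammingNorm c + hammingNorm c % 2 := by
  have parity : (if (hammingNorm c : ZMod 2) ≠ 0 then 1 else 0) = hammingNorm c % 2 := by
    simp only [ZMod.natCast_ne_zero_iff_odd, Nat.odd_iff]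
    grind
  simp only [hammingNorm, Finset.card_filter, Fin.sum_univ_castSucc, extendMap_castSucc,
    extendMap_last, sum_eq_natCast_hammingNorm] at parity ⊢
  rw [parity]

end HammingWeight

section MinimumDistance

variable {N d : ℕ} {C : Submodule (ZMod 2) (Fin N → ZMod 2)}

lemma le_minDist (hC : C ≠ ⊥) (h : ∀ c ∈ C, c ≠ 0 → d ≤ hammingNorm c) : d ≤ minDist C := by
  obtain ⟨c, hc, hc0⟩ := C.exists_mem_ne_zero_of_ne_bot hC
  refine le_csInf ⟨_, c, hc, hc0, rfl⟩ ?_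
  rintro _ ⟨b, hb, hb0, rfl⟩
  exact h b hb hb0

lemma minDist_le_hammingNorm {c : Fin N → ZMod 2} (hc : c ∈ C) (hc0 : c ≠ 0) :
    minDist C ≤ hammingNorm c :=
  Nat.sInf_le ⟨c, hc, hc0, rfl⟩

lemma exists_hammingNorm_eq_minDist (hC : C ≠ ⊥) :
    ∃ c ∈ C, c ≠ 0 ∧ hammingNorm c = minDist C := by
  obtain ⟨c, hc, hc0⟩ := C.exists_mem_ne_zero_of_ne_bot hC
  exact Nat.sInf_mem (s := {w | ∃ c ∈ C, c ≠ 0 ∧ hammingNorm c = w}) ⟨_, c, hc, hc0, rfl⟩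

lemma finrank_extendedCode (C : Submodule (ZMod 2) (Fin N → ZMod 2)) :
    Module.finrank (ZMod 2) (extendedCode C) = Module.finrank (ZMod 2) C :=
  (Submodule.equivMapOfInjective _ extendMap_injective C).finrank_eq.symm

lemma minDist_extendedCode (hC : C ≠ ⊥) :
    minDist (extendedCode C) = minDist C + minDist C % 2 := by
  have extend_ne_zero {c : Fin N → ZMod 2} : extendMap N c ≠ 0 ↔ c ≠ 0 :=
    map_ne_zero_iff _ extendMap_injective
  obtain ⟨c, hc, hc0, hmin⟩ := exists_hammingNorm_eq_minDist hC
  have mem_extended : extendMap N c ∈ extendedCode C := Submodule.mem_map_of_mem hc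
  have extended_ne_bot : extendedCode C ≠ ⊥ :=
    Submodule.ne_bot_iff _ |>.2 ⟨_, mem_extended, extend_ne_zero.2 hc0⟩
  apply le_antisymm
  · rw [← hmin, ← hammingNorm_extendMap]
    exact minDist_le_hammingNorm mem_extended (extend_ne_zero.2 hc0)
  · refine le_minDist extended_ne_bot ?_
    rintro _ ⟨b, hb, rfl⟩ hb0
    have := minDist_le_hammingNorm hb (extend_ne_zero.1 hb0)
    rw [hammingNorm_extendMap]
    lia

theorem hamming_bound {t : ℕ} (h : 2 * t < minDist C) :
    2 ^ Module.finrank (ZMod 2) C * ∑ w ∈ range (t + 1), N.choose w ≤ 2 ^ N := by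
  let ball : Finset (Fin N → ZMod 2) := {e | hammingNorm e ≤ t}
  have add_injective : Function.Injective fun x : C × ball ↦ (x.1 + x.2 : Fin N → ZMod 2) := by
    rintro ⟨⟨c, hc⟩, e, he⟩ ⟨⟨c', hc'⟩, e', he'⟩ (heq : c + e = c' + e')
    have weight_le : hammingNorm (c' - c) ≤ 2 * t := by
      rw [(by grind : c' - c = -e' + e), ← hammingDist_eq_hammingNorm]
      have := hammingDist_triangle e' 0 e
      simp only [hammingDist_zero_right, hammingDist_zero_left] at this
      simp only [ball, Finset.mem_filter_univ] at he he'
      lia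
    have codewords_eq : c' - c = 0 := by
      by_contra hne
      have := minDist_le_hammingNorm (C.sub_mem hc' hc) hne
      lia
    grind
  have card_le := Nat.card_le_card_of_injective _ add_injective
  rwa [Nat.card_prod, Module.natCard_eq_pow_finrank (K := ZMod 2) (V := C), Nat.card_zmod,
    Nat.card_eq_fintype_card, Fintype.card_coe, card_filter_hammingNorm_le, Fintype.card_fin,
    Nat.card_fun, Nat.card_zmod, Nat.card_fin] at card_le

lemma minDist_le_of_two_pow_lt_sum_choose {r t : ℕ} (hr : N ≤ Module.finrank (ZMod 2) C + r)
    (ht : 2 ^ r < ∑ w ∈ range (t + 1), N.choose w) : minDist C ≤ 2 * t := by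
  by_contra! hlt
  have : 2 ^ N < 2 ^ N := calc
    2 ^ N ≤ 2 ^ (Module.finrank (ZMod 2) C + r) := Nat.pow_le_pow_right two_pos hr
    _ = 2 ^ Module.finrank (ZMod 2) C * 2 ^ r := pow_add ..
    _ < 2 ^ Module.finrank (ZMod 2) C * ∑ w ∈ range (t + 1), N.choose w := by gcongr
    _ ≤ 2 ^ N := hamming_bound hlt
  exact this.false

end MinimumDistance

section BCHBound

lemma eq_zero_of_forall_sum_mul_pow_eq_zero {ι R : Type*} [CommRing R] [IsDomain R]
    {S : Finset ι} {v x : ι → R} (hx : Set.InjOn x S)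
    (h : ∀ j < #S, ∑ i ∈ S, v i * x i ^ j = 0) : ∀ i ∈ S, v i = 0 := by
  let e : Fin #S ≃ S := S.equivFin.symm
  have reindexed_eq_zero : (fun k ↦ v (e k)) = 0 := by
    refine Matrix.eq_zero_of_forall_pow_sum_mul_pow_eq_zero (f := fun k ↦ x (e k)) ?_ fun j ↦ ?_
    · exact (Set.injOn_iff_injective.1 hx).comp e.injective
    · rw [e.sum_comp (fun i : S ↦ v i * x i ^ (j : ℕ)),
        Finset.sum_coe_sort S (fun i ↦ v i * x i ^ (j : ℕ))]
      exact h j j.2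
  intro i hi
  simpa using congrFun reindexed_eq_zero (e.symm ⟨i, hi⟩)

variable {F : Type} [Field F] [Algebra (ZMod 2) F] {n : ℕ} {β : F} {J : Finset ℕ}

lemma mem_BCHCode {c : Fin n → ZMod 2} :
    c ∈ BCHCode n β J ↔ ∀ j ∈ J, ∑ i : Fin n, c i • β ^ (j * (i : ℕ)) = 0 :=
  Iff.rfl

theorem lt_hammingNorm_of_mem_BCHCode {δ : ℕ} (hn : n ≤ orderOf β)
    (hJ : ∀ j, 1 ≤ j → j ≤ δ → j ∈ J) {c : Fin n → ZMod 2} (hc : c ∈ BCHCode n β J)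
    (hc0 : c ≠ 0) : δ < hammingNorm c := by
  by_contra! hle
  let S : Finset (Fin n) := {i | c i ≠ 0}
  have pow_injective : Function.Injective fun i : Fin n ↦ β ^ (i : ℕ) := fun i j hij ↦
    Fin.ext (pow_injOn_Iio_orderOf (i.2.trans_le hn) (j.2.trans_le hn) hij)
  have locator_sum_eq_zero : ∀ j < #S,
      ∑ i ∈ S, algebraMap (ZMod 2) F (c i) * β ^ (i : ℕ) * (β ^ (i : ℕ)) ^ j = 0 := by
    intro j hj
    rw [Finset.sum_filter_of_ne (by aesop), ← hc (j + 1) (hJ _ (by lia) (hj.trans_le hle))]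
    refine Finset.sum_congr rfl fun i _ ↦ ?_
    rw [Algebra.smul_def]
    ring
  obtain ⟨i, hi⟩ := Function.ne_iff.1 hc0
  have hβ0 : β ≠ 0 := by
    rintro rfl
    simp only [orderOf_zero] at hn
    exact (i.2.trans_le hn).not_ge (Nat.zero_le _)
  have := eq_zero_of_forall_sum_mul_pow_eq_zero pow_injective.injOn locator_sum_eq_zero i
    (by simpa [S] using hi)
  simp_all

lemma BCHCode_insert_two_mul {j : ℕ} (hj : j ∈ J) :
    BCHCode n β (insert (2 * j) J) = BCHCode n β J := by
  have := charP_of_injective_algebraMap (algebraMap (ZMod 2) F).injective 2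
  have sum_sq (c : Fin n → ZMod 2) : ∑ i : Fin n, c i • β ^ (2 * j * (i : ℕ)) =
      (∑ i : Fin n, c i • β ^ (j * (i : ℕ))) ^ 2 := by
    rw [CharTwo.sum_sq]
    refine Finset.sum_congr rfl fun i _ ↦ ?_
    rw [smul_pow, (by decide +revert : ∀ x : ZMod 2, x ^ 2 = x), ← pow_mul]
    ring_nf
  ext c
  simp only [mem_BCHCode, Finset.forall_mem_insert, sum_sq, and_iff_right_iff_imp]
  intro hc
  rw [hc j hj, zero_pow two_ne_zero]

lemma five_le_hammingNorm_of_mem_BCHCode (hn : n ≤ orderOf β) {c : Fin n → ZMod 2}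
    (hc : c ∈ BCHCode n β {1, 3}) (hc0 : c ≠ 0) : 5 ≤ hammingNorm c := by
  rw [← BCHCode_insert_two_mul (j := 1) (by decide),
    ← BCHCode_insert_two_mul (j := 2) (by decide)] at hc
  exact lt_hammingNorm_of_mem_BCHCode hn (fun j _ _ ↦ by interval_cases j <;> decide) hc hc0

end BCHBound

section Syndrome

open Polynomial

lemma exists_forall_aeval_eq {ι K A : Type*} [Finite ι] [Field K] [CommRing A] [Algebra K A]
    {x : ι → A} (hgen : ∀ i, Algebra.adjoin K {x i} = ⊤)
    (hcop : Pairwise fun i j ↦ IsCoprime (minpoly K (x i)) (minpoly K (x j))) (y : ι → A) :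
    ∃ p : K[X], ∀ i, aeval (x i) p = y i := by
  have exists_aeval (i : ι) : ∃ p : K[X], aeval (x i) p = y i := by
    have : y i ∈ Algebra.adjoin K {x i} := hgen i ▸ Algebra.mem_top
    rwa [Algebra.adjoin_singleton_eq_range_aeval] at this
  choose q hq using exists_aeval
  obtain ⟨p, hp⟩ := Ideal.exists_forall_sub_mem_ideal (I := fun i ↦ Ideal.span {minpoly K (x i)})
    (fun i j hij ↦ (Ideal.isCoprime_span_singleton_iff _ _).2 (hcop hij)) q
  refine ⟨p, fun i ↦ ?_⟩
  have : aeval (x i) (p - q i) = 0 :=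
    aeval_eq_zero_of_dvd_aeval_eq_zero (Ideal.mem_span_singleton.1 (hp i)) (minpoly.aeval _ _)
  rw [← hq i, ← sub_eq_zero, ← map_sub, this]

lemma sum_coeff_modByMonic_X_pow_sub_one_smul {R A : Type*} [CommRing R] [Nontrivial R]
    [CommRing A] [Algebra R A] {n : ℕ} (hn : n ≠ 0) {x : A} (hx : x ^ n = 1) (p : R[X]) :
    ∑ i : Fin n, (p %ₘ (X ^ n - 1)).coeff i • x ^ (i : ℕ) = aeval x p := by
  have monic : (X ^ n - 1 : R[X]).Monic := monic_X_pow_sub_C 1 hn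
  have natDegree_lt : (p %ₘ (X ^ n - 1)).natDegree < n := by
    have natDegree_eq : (X ^ n - 1 : R[X]).natDegree = n := natDegree_X_pow_sub_C (r := 1)
    have := natDegree_modByMonic_lt p monic fun h ↦ hn (by rw [← natDegree_eq, h, natDegree_one])
    rwa [natDegree_eq] at this
  rw [Fin.sum_univ_eq_sum_range (fun i ↦ (p %ₘ (X ^ n - 1)).coeff i • x ^ i) n,
    ← aeval_eq_sum_range' natDegree_lt]
  exact aeval_modByMonic_eq_self_of_root (by simp [hx])

variable {F : Type} [Field F] [Algebra (ZMod 2) F] {n : ℕ} {β : F} {J : Finset ℕ}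

/-- The syndrome map of `BCHCode n β J`: it sends a word, read as a polynomial `c`, to the family
of its values `c (β ^ j)` at the zeros `j ∈ J`. -/
def bchSyndrome (n : ℕ) (β : F) (J : Finset ℕ) : (Fin n → ZMod 2) →ₗ[ZMod 2] (J → F) :=
  LinearMap.pi fun j ↦ Fintype.linearCombination (ZMod 2) fun i : Fin n ↦ β ^ ((j : ℕ) * (i : ℕ))

lemma ker_bchSyndrome : LinearMap.ker (bchSyndrome n β J) = BCHCode n β J := by
  ext c
  simp [mem_BCHCode, bchSyndrome, funext_iff, Fintype.linearCombination_apply]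

lemma bchSyndrome_surjective (hn : n ≠ 0) (hβ : β ^ n = 1)
    (hgen : ∀ j ∈ J, Algebra.adjoin (ZMod 2) {β ^ j} = ⊤)
    (hcop : (J : Set ℕ).Pairwise fun i j ↦
      IsCoprime (minpoly (ZMod 2) (β ^ i)) (minpoly (ZMod 2) (β ^ j))) :
    Function.Surjective (bchSyndrome n β J) := by
  intro y
  obtain ⟨p, hp⟩ := exists_forall_aeval_eq (x := fun j : J ↦ β ^ (j : ℕ))
    (fun j ↦ hgen j j.2) (fun i j hij ↦ hcop i.2 j.2 (Subtype.coe_ne_coe.2 hij)) y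
  refine ⟨fun i ↦ (p %ₘ (X ^ n - 1)).coeff i, funext fun j ↦ ?_⟩
  have pow_eq_one : (β ^ (j : ℕ)) ^ n = 1 := by rw [pow_right_comm, hβ, one_pow]
  have := sum_coeff_modByMonic_X_pow_sub_one_smul hn pow_eq_one p
  simpa [bchSyndrome, Fintype.linearCombination_apply, pow_mul, hp j] using this

theorem finrank_BCHCode_add [FiniteDimensional (ZMod 2) F] (hn : n ≠ 0) (hβ : β ^ n = 1)
    (hgen : ∀ j ∈ J, Algebra.adjoin (ZMod 2) {β ^ j} = ⊤)
    (hcop : (J : Set ℕ).Pairwise fun i j ↦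
      IsCoprime (minpoly (ZMod 2) (β ^ i)) (minpoly (ZMod 2) (β ^ j))) :
    Module.finrank (ZMod 2) (BCHCode n β J) + #J * Module.finrank (ZMod 2) F = n := by
  have := (bchSyndrome n β J).finrank_range_add_finrank_ker
  rw [LinearMap.range_eq_top.2 (bchSyndrome_surjective hn hβ hgen hcop), finrank_top,
    ker_bchSyndrome, Module.finrank_pi_fintype] at this
  simpa [add_comm] using this

end Syndrome

section FiniteField

variable {K F : Type*} [Field K] [Field F] [Finite F] [Algebra K F]

lemma orderOf_lt_natCard (x : F) : orderOf x < Nat.card F := by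
  have := Fintype.ofFinite F
  rcases eq_or_ne x 0 with rfl | hx
  · simpa using Nat.card_pos (α := F)
  · have card_sub_one_pos : 0 < Fintype.card F - 1 := Nat.sub_pos_of_lt Fintype.one_lt_card
    have := orderOf_le_of_pow_eq_one card_sub_one_pos (FiniteField.pow_card_sub_one_eq_one x hx)
    rw [Nat.card_eq_fintype_card]
    lia

lemma adjoin_singleton_eq_top_of_pow_le_orderOf {x : F}
    (hx : Nat.card K ^ (Module.finrank K F / 2) ≤ orderOf x) : Algebra.adjoin K {x} = ⊤ := by
  have : Finite K := Finite.of_injective _ (algebraMap K F).injective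
  let E := IntermediateField.adjoin K {x}
  have orderOf_gen : orderOf (IntermediateField.AdjoinSimple.gen K x) = orderOf x :=
    (orderOf_injective (E.val : E →* F) E.val.injective _).symm
  have order_lt : orderOf x < Nat.card K ^ Module.finrank K E := by
    rw [← Module.natCard_eq_pow_finrank, ← orderOf_gen]
    exact orderOf_lt_natCard _
  have half_lt : Module.finrank K F / 2 < Module.finrank K E :=
    (Nat.pow_lt_pow_iff_right Finite.one_lt_card).1 (hx.trans_lt order_lt)
  have finrank_eq_one : Module.finrank E F = 1 := by
    have tower := Module.finrank_mul_finrank K E F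
    have pos : 0 < Module.finrank E F := Module.finrank_pos
    by_contra hne
    have : Module.finrank K E * 2 ≤ Module.finrank K F :=
      tower ▸ Nat.mul_le_mul_left _ (by lia)
    lia
  have E_eq_top : E = ⊤ := IntermediateField.finrank_eq_one_iff_eq_top.1 finrank_eq_one
  rw [← IntermediateField.adjoin_simple_toSubalgebra_of_isAlgebraic (.of_finite K x),
    show IntermediateField.adjoin K {x} = ⊤ from E_eq_top, IntermediateField.top_toSubalgebra]

lemma isCoprime_minpoly_of_forall_pow_ne {x y : F}
    (h : ∀ k < Module.finrank K F, x ^ Nat.card K ^ k ≠ y) :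
    IsCoprime (minpoly K x) (minpoly K y) := by
  have : Finite K := Finite.of_injective _ (algebraMap K F).injective
  have := Fintype.ofFinite K
  have irreducible : Irreducible (minpoly K x) := minpoly.irreducible (.of_finite K x)
  refine (dvd_or_isCoprime _ _ irreducible).resolve_left fun hdvd ↦ ?_
  have conj : IsConjRoot K y x := isConjRoot_of_aeval_eq_zero (.of_finite K y) <|
    Polynomial.aeval_eq_zero_of_dvd_aeval_eq_zero hdvd (minpoly.aeval K x)
  obtain ⟨σ, hσ⟩ := conj.exists_algEquiv
  obtain ⟨k, rfl⟩ := (FiniteField.bijective_frobeniusAlgEquivOfAlgebraic_pow K F).2 σ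
  simp only [AlgEquiv.coe_pow, FiniteField.coe_frobeniusAlgEquivOfAlgebraic_iterate] at hσ
  exact h k k.2 (by rwa [Nat.card_eq_fintype_card])

end FiniteField

section Arithmetic

lemma six_mul_sum_choose (n : ℕ) : 6 * ∑ w ∈ range 4, n.choose w = n ^ 3 + 5 * n + 6 := by
  have choose_two (k : ℕ) : 2 * k.choose 2 + k = k ^ 2 := by
    induction k with
    | zero => rfl
    | succ k ih => rw [Nat.choose_succ_succ, Nat.choose_one_right]; linarith
  simp only [Finset.sum_range_succ, Finset.sum_range_zero, Nat.choose_zero_right,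
    Nat.choose_one_right]
  induction n with
  | zero => rfl
  | succ n ih =>
    rw [Nat.choose_succ_succ n 2, Nat.choose_succ_succ n 1, Nat.choose_one_right]
    nlinarith [choose_two n]

-- If `2 ^ k ≡ 3` then `3 * 2 ^ (m - k) ≡ 1`, and neither congruence is an equality.
lemma sq_le_of_two_pow_modEq_three {m n k : ℕ} (hn : 2 < n) (hm : 2 ^ m ≡ 1 [MOD n]) (hk : k ≤ m)
    (hmod : 2 ^ k ≡ 3 [MOD n]) : n ^ 2 ≤ 3 * 2 ^ m := by
  have split : 2 ^ k * 2 ^ (m - k) = 2 ^ m := by rw [← pow_add, Nat.add_sub_cancel' hk]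
  have le_two_pow : n ≤ 2 ^ k := by
    by_contra! hlt
    have three_mod_eq : 2 ^ k = 3 % n := (Nat.mod_eq_of_lt hlt).symm.trans hmod
    rcases (by lia : n = 3 ∨ 3 < n) with rfl | hn3
    · simp at three_mod_eq
    · rw [Nat.mod_eq_of_lt hn3] at three_mod_eq
      cases k <;> lia
  have le_three_mul : n ≤ 3 * 2 ^ (m - k) := by
    have : 3 * 2 ^ (m - k) ≡ 1 [MOD n] := (hmod.symm.mul_right _).trans (split ▸ hm)
    have pos : 1 ≤ 2 ^ (m - k) := Nat.one_le_two_pow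
    have := Nat.le_of_dvd (by lia) ((Nat.modEq_iff_dvd' (by lia)).1 this.symm)
    lia
  calc n ^ 2 = n * n := sq n
    _ ≤ 2 ^ k * (3 * 2 ^ (m - k)) := Nat.mul_le_mul le_two_pow le_three_mul
    _ = 3 * 2 ^ m := by rw [← split]; ring

lemma sum_choose_le_two_pow (n k : ℕ) : ∑ w ∈ range k, n.choose w ≤ 2 ^ n := by
  have sum_eq : ∑ w ∈ range (n + 1 + k), n.choose w = 2 ^ n := by
    rw [Finset.sum_range_add, Nat.sum_range_choose, Nat.add_eq_left]
    exact Finset.sum_eq_zero fun w _ ↦ Nat.choose_eq_zero_of_lt (by lia)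
  exact sum_eq ▸ Finset.sum_le_sum_of_subset (Finset.range_mono (Nat.le_add_left k (n + 1)))

lemma sum_choose_le_pow_four {n t : ℕ} (h : n ≤ 3 * t) :
    ∑ w ∈ range 4, n.choose w ≤ (t + 1) ^ 4 := by
  have cube_le : n ^ 3 ≤ (3 * t) ^ 3 := Nat.pow_le_pow_left h 3
  have cube_le_pow_four : t ^ 3 ≤ t ^ 4 := by
    rcases t.eq_zero_or_pos with rfl | ht
    · rfl
    · exact Nat.pow_le_pow_right ht (by simp)
  have := six_mul_sum_choose n
  nlinarith [Nat.zero_le (t ^ 2), Nat.zero_le (t ^ 3)]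

lemma three_dvd_four_pow_sub_one (s : ℕ) : 3 ∣ 4 ^ s - 1 := by
  simpa using Nat.sub_dvd_pow_sub_pow 4 1 s

lemma three_mul_four_pow_sub_one_div_three_add_one (s : ℕ) :
    3 * ((4 ^ s - 1) / 3) + 1 = 4 ^ s := by
  rw [Nat.mul_div_cancel' (three_dvd_four_pow_sub_one s), Nat.sub_add_cancel]
  exact Nat.one_le_pow s 4 four_pos

lemma two_pow_four_mul (s : ℕ) : 2 ^ (4 * s) = (4 ^ s) ^ 2 := by
  rw [pow_mul]
  exact pow_right_comm 4 2 s

lemma two_pow_four_mul_lt_sum_choose {s n : ℕ} (hs : 4 ≤ s) (hn : 3 * n + 1 = 4 ^ s) :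
    2 ^ (4 * s) < ∑ w ∈ range 4, n.choose w := by
  have : 4 ^ 4 ≤ 4 ^ s := Nat.pow_le_pow_right four_pos hs
  have hn_lower : 85 ≤ n := by lia
  have := six_mul_sum_choose n
  rw [two_pow_four_mul, ← hn]
  nlinarith [Nat.mul_le_mul_right (n ^ 2) hn_lower]

lemma two_pow_four_mul_add_one_lt_sum_choose {s n : ℕ} (hs : 5 ≤ s) (hn : 3 * n + 1 = 4 ^ s) :
    2 ^ (4 * s + 1) < ∑ w ∈ range 4, (n + 1).choose w := by
  have : 4 ^ 5 ≤ 4 ^ s := Nat.pow_le_pow_right four_pos hs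
  have hn_lower : 341 ≤ n := by lia
  have := six_mul_sum_choose (n + 1)
  rw [pow_succ, two_pow_four_mul, ← hn]
  nlinarith [Nat.mul_le_mul_right (n ^ 2) hn_lower]

lemma orderOf_le_mul_orderOf_pow {G : Type*} [Monoid G] (x : G) {k : ℕ} (hk : k ≠ 0) :
    orderOf x ≤ k * orderOf (x ^ k) := by
  rw [orderOf_pow' x hk]
  calc orderOf x = (orderOf x).gcd k * (orderOf x / (orderOf x).gcd k) :=
        (Nat.mul_div_cancel' (Nat.gcd_dvd_left _ _)).symm
    _ ≤ k * (orderOf x / (orderOf x).gcd k) :=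
        Nat.mul_le_mul_right _ (Nat.gcd_le_right _ (Nat.pos_of_ne_zero hk))

end Arithmetic

section BCHParameters

open Module (finrank)

variable {F : Type} [Field F] [Finite F] [Algebra (ZMod 2) F] {n : ℕ} {β : F}

lemma adjoin_cube_eq_top (hn : 2 ^ (2 * finrank (ZMod 2) F) < ∑ w ∈ range 4, (orderOf β).choose w) :
    Algebra.adjoin (ZMod 2) {β ^ 3} = ⊤ := by
  refine adjoin_singleton_eq_top_of_pow_le_orderOf ?_
  rw [Nat.card_zmod]
  by_contra! hlt
  refine hn.not_ge ?_
  calc ∑ w ∈ range 4, (orderOf β).choose w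
      ≤ (orderOf (β ^ 3) + 1) ^ 4 :=
        sum_choose_le_pow_four (orderOf_le_mul_orderOf_pow β three_ne_zero)
    _ ≤ (2 ^ (finrank (ZMod 2) F / 2)) ^ 4 := Nat.pow_le_pow_left hlt 4
    _ = 2 ^ (finrank (ZMod 2) F / 2 * 4) := (pow_mul ..).symm
    _ ≤ 2 ^ (2 * finrank (ZMod 2) F) := Nat.pow_le_pow_right two_pos (by lia)

lemma isCoprime_minpoly_cube
    (hn : 2 ^ (2 * finrank (ZMod 2) F) < ∑ w ∈ range 4, (orderOf β).choose w) :
    IsCoprime (minpoly (ZMod 2) β) (minpoly (ZMod 2) (β ^ 3)) := by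
  have : FiniteDimensional (ZMod 2) F := .of_finite
  set m := finrank (ZMod 2) F
  set n := orderOf β with hord
  have card_eq : Nat.card F = 2 ^ m := by
    rw [Module.natCard_eq_pow_finrank (K := ZMod 2), Nat.card_zmod]
  have n_lt : n < 2 ^ m := card_eq ▸ orderOf_lt_natCard β
  have hsum := six_mul_sum_choose n
  have pow_two_mul : 2 ^ (2 * m) = 2 ^ m * 2 ^ m := by rw [two_mul, pow_add]
  refine isCoprime_minpoly_of_forall_pow_ne fun k hk hconj ↦ ?_
  rw [Nat.card_zmod] at hconj
  have two_lt : 2 < n := by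
    have : 2 ^ 1 ≤ 2 ^ m := Nat.pow_le_pow_right two_pos (by lia)
    by_contra! hle
    interval_cases n <;> nlinarith
  have fin_order : IsOfFinOrder β := orderOf_pos_iff.1 (by lia)
  have pow_card : 2 ^ m ≡ 1 [MOD n] := by
    have := Fintype.ofFinite F
    rw [hord, ← fin_order.pow_eq_pow_iff_modEq, ← card_eq, Nat.card_eq_fintype_card,
      FiniteField.pow_card, pow_one]
  have sq_le : n ^ 2 ≤ 3 * 2 ^ m := sq_le_of_two_pow_modEq_three two_lt pow_card hk.le
    (fin_order.pow_eq_pow_iff_modEq.1 hconj)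
  nlinarith

theorem finrank_BCHCode_one_three_add (hβ : orderOf β = n)
    (hn : 2 ^ (2 * finrank (ZMod 2) F) < ∑ w ∈ range 4, n.choose w) :
    finrank (ZMod 2) (BCHCode n β {1, 3}) + 2 * finrank (ZMod 2) F = n := by
  subst hβ
  have : FiniteDimensional (ZMod 2) F := .of_finite
  have adjoin_cube := adjoin_cube_eq_top hn
  have adjoin_eq_top : Algebra.adjoin (ZMod 2) {β} = ⊤ := by
    rw [eq_top_iff, ← adjoin_cube]
    exact Algebra.adjoin_singleton_le (pow_mem (Algebra.self_mem_adjoin_singleton _ _) 3)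
  have order_ne_zero : orderOf β ≠ 0 := by
    intro h0
    simp only [h0] at hn
    simp [Finset.sum_range_succ] at hn
  refine finrank_BCHCode_add (J := {1, 3}) order_ne_zero (pow_orderOf_eq_one β) ?_ ?_
  · simp [adjoin_cube, adjoin_eq_top]
  · have coprime := isCoprime_minpoly_cube hn
    rw [← pow_one β, ← pow_mul, one_mul] at coprime
    intro i hi j hj hij
    simp only [Finset.mem_coe, Finset.mem_insert, Finset.mem_singleton] at hi hj
    rcases hi with rfl | rfl <;> rcases hj with rfl | rfl
    exacts [absurd rfl hij, coprime, coprime.symm, absurd rfl hij]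

end BCHParameters

theorem stmt_17_general {F : Type} [Field F] [Finite F] [Algebra (ZMod 2) F] {n r : ℕ} {β : F}
    (hβ : orderOf β = n) (hr : 2 * Module.finrank (ZMod 2) F = r)
    (hn : 2 ^ r < ∑ w ∈ range 4, n.choose w) :
    Module.finrank (ZMod 2) (BCHCode n β {1, 3}) = n - r ∧
    5 ≤ minDist (BCHCode n β {1, 3}) ∧
    minDist (BCHCode n β {1, 3}) ≤ 6 ∧
    Module.finrank (ZMod 2) (extendedCode (BCHCode n β {1, 3})) = n - r ∧
    minDist (extendedCode (BCHCode n β {1, 3})) = 6 ∧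
    (2 ^ (r + 1) < ∑ w ∈ range 4, (n + 1).choose w →
      ∀ D : Submodule (ZMod 2) (Fin (n + 1) → ZMod 2),
        Module.finrank (ZMod 2) D = n - r → minDist D ≤ 6) := by
  have finrank_add : Module.finrank (ZMod 2) (BCHCode n β {1, 3}) + r = n :=
    hr ▸ finrank_BCHCode_one_three_add hβ (hr ▸ hn)
  have finrank_eq : Module.finrank (ZMod 2) (BCHCode n β {1, 3}) = n - r := by lia
  have ne_bot : BCHCode n β {1, 3} ≠ ⊥ := by
    intro hbot
    rw [hbot, finrank_bot] at finrank_add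
    have := hn.trans_le (sum_choose_le_two_pow n 4)
    rw [← finrank_add, zero_add] at this
    exact this.false
  have five_le : 5 ≤ minDist (BCHCode n β {1, 3}) :=
    le_minDist ne_bot fun c hc hc0 ↦ five_le_hammingNorm_of_mem_BCHCode hβ.ge hc hc0
  have le_six : minDist (BCHCode n β {1, 3}) ≤ 6 :=
    minDist_le_of_two_pow_lt_sum_choose (t := 3) finrank_add.ge hn
  refine ⟨finrank_eq, five_le, le_six, (finrank_extendedCode _).trans finrank_eq, ?_, ?_⟩
  · rw [minDist_extendedCode ne_bot]
    lia
  · intro hn' D hD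
    exact minDist_le_of_two_pow_lt_sum_choose (t := 3) (by lia) hn'

theorem stmt_17 (s : ℕ) (hs : 4 ≤ s) (n : ℕ) (hn : n = (4 ^ s - 1) / 3)
    (α : GaloisField 2 (2 * s)) (hα : orderOf α = 2 ^ (2 * s) - 1)
    (β : GaloisField 2 (2 * s)) (hβ : β = α ^ (3)) :
    Module.finrank (ZMod 2) (BCHCode n β {1, 3}) = n - 4 * s ∧
    5 ≤ minDist (BCHCode n β {1, 3}) ∧
    minDist (BCHCode n β {1, 3}) ≤ 6 ∧
    Module.finrank (ZMod 2) (extendedCode (BCHCode n β {1, 3})) = n - 4 * s ∧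
    minDist (extendedCode (BCHCode n β {1, 3})) = 6 ∧
    (5 ≤ s →
      ∀ D : Submodule (ZMod 2) (Fin (n + 1) → ZMod 2),
        Module.finrank (ZMod 2) D = n - 4 * s → minDist D ≤ 6) := by
  have four_pow_eq : 3 * n + 1 = 4 ^ s := hn ▸ three_mul_four_pow_sub_one_div_three_add_one s
  have order_eq : orderOf β = n := by
    have orderOf_α : orderOf α = 4 ^ s - 1 := by rw [hα, pow_mul]; rfl
    rw [hβ, hn, ← orderOf_α,
      orderOf_pow_of_dvd three_ne_zero (orderOf_α ▸ three_dvd_four_pow_sub_one s)]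
  have finrank_eq : 2 * Module.finrank (ZMod 2) (GaloisField 2 (2 * s)) = 4 * s := by
    rw [GaloisField.finrank 2 (by lia)]
    lia
  obtain ⟨finrank_code, five_le, le_six, finrank_ext, minDist_ext, optimal⟩ :=
    stmt_17_general order_eq finrank_eq (two_pow_four_mul_lt_sum_choose hs four_pow_eq)
  exact ⟨finrank_code, five_le, le_six, finrank_ext, minDist_ext,
    fun hs' ↦ optimal (two_pow_four_mul_add_one_lt_sum_choose hs' four_pow_eq)⟩
end

section
/- Let s ≥ 3 be an integer, let λ be a divisor of 2^s−1 with λ < 2^{⌊s/2⌋}, and let n = (2^s−1)/λ. Then: (i) the multiplicative order of 2 modulo n equals s; (ii) for every odd integer i with 1 ≤ i ≤ 2^{⌈s/2⌉}/λ, the 2-cyclotomic coset C_i modulo n has cardinality s; and (iii) every such odd i is the coset leader of its 2-cyclotomic coset C_i. -/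
open Finset

/-!
Let `P = 2 ^ j` and `Q = 2 ^ (s - j)`. Multiplication by `P` modulo `P * Q - 1 = 2 ^ s - 1` rotates
binary digits: `a = A * Q + B` becomes `B * P + A`. If `a` is odd then `B ≠ 0`, and if moreover
`a < 2 ^ ⌈s / 2⌉ ≤ max P Q`, every nontrivial rotation strictly increases `a`. For `a = i * λ`,
dividing by `λ` gives `i < i * 2 ^ j mod n` whenever `0 < j < s`. So `i` is the least element of its
coset, the coset has exactly `s` elements, and the case `i = 1` gives the order of `2`.
Nothing here is special to base `2`.
-/

/-- The `q`-cyclotomic coset of `i` modulo `n`, as a set of natural numbers. For `q = 2` it is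
definitionally `cycCoset n i`. -/
def cyclotomicCoset (q n i : ℕ) : Set ℕ := {x | ∃ j : ℕ, x = i * q ^ j % n}

section DigitRotation

variable {P Q a q s j n lam i : ℕ}

theorem mul_mod_mul_sub_one (ha : a < P * Q - 1) :
    a * P % (P * Q - 1) = a / Q + a % Q * P := by
  have hQ : 0 < Q := Nat.pos_of_ne_zero fun h => by simp [h] at ha
  have hdiv : a / Q < P := Nat.div_lt_of_lt_mul (by rw [mul_comm]; omega)
  have hmod : a % Q < Q := Nat.mod_lt a hQ
  have hdecomp : Q * (a / Q) + a % Q = a := Nat.div_add_mod a Q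
  generalize a / Q = A at *
  generalize a % Q = B at *
  have hsplit : a * P = A + B * P + (P * Q - 1) * A := by
    zify [show 1 ≤ P * Q by omega]
    rw [← hdecomp]
    push_cast
    ring
  -- The digits `A` and `B` are not both maximal, since `a ≠ P * Q - 1`.
  have hlt : A + B * P < P * Q - 1 := by
    obtain hB | hB : B + 1 = Q ∨ B + 2 ≤ Q := by omega
    · subst hB
      have hA : A + 1 ≠ P := by
        rintro rfl
        have : (A + 1) * (B + 1) = (B + 1) * A + B + 1 := by ring
        omega
      have : P * (B + 1) = B * P + P := by ring
      omega
    · have : (B + 2) * P ≤ Q * P := Nat.mul_le_mul_right P hB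
      have : (B + 2) * P = B * P + 2 * P := by ring
      rw [mul_comm P Q]
      omega
  rw [hsplit, Nat.add_mul_mod_self_left, Nat.mod_eq_of_lt hlt]

theorem lt_mul_mod_mul_sub_one (hP : 1 < P) (hQ : 1 < Q) (hQa : ¬ Q ∣ a) (ha : a < max P Q) :
    a < a * P % (P * Q - 1) := by
  have hmax : max P Q ≤ P * Q - 1 := by
    have : P * 2 ≤ P * Q := Nat.mul_le_mul_left P hQ
    have : 2 * Q ≤ P * Q := Nat.mul_le_mul_right Q hP
    omega
  rw [mul_mod_mul_sub_one (ha.trans_le hmax)]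
  have hmod : 0 < a % Q := Nat.pos_of_ne_zero fun h => hQa (Nat.dvd_of_mod_eq_zero h)
  rcases lt_max_iff.mp ha with haP | haQ
  · calc a < P := haP
      _ ≤ a % Q * P := Nat.le_mul_of_pos_left P hmod
      _ ≤ a / Q + a % Q * P := Nat.le_add_left _ _
  · rw [Nat.mod_eq_of_lt haQ] at hmod ⊢
    rw [Nat.div_eq_of_lt haQ, zero_add]
    exact lt_mul_of_one_lt_right hmod hP

theorem lt_mul_pow_mod_pow_sub_one (hq : 1 < q) (hqa : ¬ q ∣ a) (ha : a < q ^ ((s + 1) / 2))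
    (hj : 0 < j) (hjs : j < s) : a < a * q ^ j % (q ^ s - 1) := by
  have hsj : s - j ≠ 0 := by omega
  have hmax : q ^ ((s + 1) / 2) ≤ max (q ^ j) (q ^ (s - j)) := by
    rw [← (pow_right_mono₀ hq.le).map_max]
    exact pow_right_mono₀ hq.le (by omega)
  rw [← pow_mul_pow_sub q hjs.le]
  exact lt_mul_mod_mul_sub_one (Nat.one_lt_pow hj.ne' hq) (Nat.one_lt_pow hsj hq)
    (fun h => hqa ((dvd_pow_self q hsj).trans h)) (ha.trans_le hmax)

theorem lt_mul_pow_mod_of_mul_eq_pow_sub_one (hq : 1 < q) (hn : n * lam = q ^ s - 1)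
    (hqi : ¬ q ∣ i * lam) (hi : i * lam < q ^ ((s + 1) / 2)) (hj : 0 < j) (hjs : j < s) :
    i < i * q ^ j % n := by
  have hscaled := lt_mul_pow_mod_pow_sub_one hq hqi hi hj hjs
  rw [← hn, mul_right_comm, Nat.mul_mod_mul_right] at hscaled
  exact Nat.lt_of_mul_lt_mul_right hscaled

end DigitRotation

section Coset

variable {q s n i : ℕ}

theorem orderOf_natCast_zmod_eq (hs : 0 < s) (hper : q ^ s ≡ 1 [MOD n])
    (hne : ∀ j, 0 < j → j < s → ¬ q ^ j ≡ 1 [MOD n]) : orderOf (q : ZMod n) = s := by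
  have hpow (j : ℕ) : (q : ZMod n) ^ j = 1 ↔ q ^ j ≡ 1 [MOD n] := by
    rw [← ZMod.natCast_eq_natCast_iff, Nat.cast_pow, Nat.cast_one]
  rw [orderOf_eq_iff hs]
  exact ⟨(hpow s).mpr hper, fun j hjs hj h => hne j hj hjs ((hpow j).mp h)⟩

theorem coprime_of_pow_modEq_one (hs : s ≠ 0) (hper : q ^ s ≡ 1 [MOD n]) : q.Coprime n :=
  Nat.coprime_of_mul_modEq_one (q ^ (s - 1)) (by rwa [mul_pow_sub_one hs])

theorem pow_modEq_pow_mod (hper : q ^ s ≡ 1 [MOD n]) (j : ℕ) : q ^ j ≡ q ^ (j % s) [MOD n] := by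
  calc q ^ j = q ^ (j % s) * (q ^ s) ^ (j / s) := by rw [← pow_mul, ← pow_add, Nat.mod_add_div]
    _ ≡ q ^ (j % s) * 1 ^ (j / s) [MOD n] := (hper.pow _).mul_left _
    _ = q ^ (j % s) := by rw [one_pow, mul_one]

theorem cyclotomicCoset_eq_image_Iio (hs : 0 < s) (hper : q ^ s ≡ 1 [MOD n]) :
    cyclotomicCoset q n i = (fun j => i * q ^ j % n) '' Set.Iio s := by
  ext x
  constructor
  · rintro ⟨j, rfl⟩
    exact ⟨j % s, Nat.mod_lt j hs, ((pow_modEq_pow_mod hper j).mul_left i).symm⟩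
  · rintro ⟨j, -, rfl⟩
    exact ⟨j, rfl⟩

theorem injOn_mul_pow_mod (hqn : q.Coprime n)
    (hne : ∀ j, 0 < j → j < s → ¬ i * q ^ j ≡ i [MOD n]) :
    Set.InjOn (fun j => i * q ^ j % n) (Set.Iio s) := by
  intro j hj k hk hjk
  wlog hle : j ≤ k generalizing j k
  · exact (this hk hj hjk.symm (by omega)).symm
  by_contra hjk_ne
  have hmul : q ^ j * (i * q ^ (k - j)) ≡ q ^ j * i [MOD n] := by
    rw [mul_left_comm, pow_mul_pow_sub q hle, mul_comm _ i]
    exact hjk.symm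
  exact hne (k - j) (by omega) ((Nat.sub_le k j).trans_lt hk)
    (hmul.cancel_left_of_coprime (hqn.pow_left j).symm)

theorem ncard_cyclotomicCoset (hs : 0 < s) (hper : q ^ s ≡ 1 [MOD n])
    (hne : ∀ j, 0 < j → j < s → ¬ i * q ^ j ≡ i [MOD n]) : (cyclotomicCoset q n i).ncard = s := by
  have hqn : q.Coprime n := coprime_of_pow_modEq_one hs.ne' hper
  rw [cyclotomicCoset_eq_image_Iio hs hper, (injOn_mul_pow_mod hqn hne).ncard_image,
    ← Finset.coe_range, Set.ncard_coe_finset, Finset.card_range]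

theorem isLeast_cyclotomicCoset (hs : 0 < s) (hper : q ^ s ≡ 1 [MOD n]) (hin : i < n)
    (hle : ∀ j, 0 < j → j < s → i ≤ i * q ^ j % n) : IsLeast (cyclotomicCoset q n i) i := by
  have hzero : i * q ^ 0 % n = i := by rw [pow_zero, mul_one, Nat.mod_eq_of_lt hin]
  refine ⟨⟨0, hzero.symm⟩, ?_⟩
  rw [cyclotomicCoset_eq_image_Iio hs hper]
  rintro _ ⟨j, hjs, rfl⟩
  obtain rfl | hj := j.eq_zero_or_pos
  · exact hzero.ge
  · exact hle j hj hjs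

end Coset

theorem not_modEq_of_lt_mod {a b n : ℕ} (h : a < b % n) : ¬ b ≡ a [MOD n] := fun hba =>
  (h.trans_eq hba).not_ge (Nat.mod_le a n)

theorem mul_lt_pow_of_le_pow_div {q k lam i : ℕ} (hk : k ≠ 0) (hlam : q.Coprime lam)
    (hqi : ¬ q ∣ i) (hi : i ≤ q ^ k / lam) : i * lam < q ^ k := by
  refine (Nat.mul_le_of_le_div lam i (q ^ k) hi).lt_of_ne fun h => hqi ?_
  exact hlam.dvd_of_dvd_mul_right (h ▸ dvd_pow_self q hk)

theorem stmt_18_general {q s lam n : ℕ} (hq : 1 < q) (hs : 2 ≤ s) (hdvd : lam ∣ q ^ s - 1)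
    (hlt : lam < q ^ ((s + 1) / 2)) (hn : n = (q ^ s - 1) / lam) :
    orderOf (q : ZMod n) = s ∧
    ∀ i : ℕ, ¬ q ∣ i → i ≤ q ^ ((s + 1) / 2) / lam →
      (cyclotomicCoset q n i).ncard = s ∧ IsLeast (cyclotomicCoset q n i) i := by
  have hs0 : 0 < s := by omega
  have hmul : n * lam = q ^ s - 1 := hn ▸ Nat.div_mul_cancel hdvd
  have hqs : 1 < q ^ s := Nat.one_lt_pow hs0.ne' hq
  have hn0 : 0 < n := Nat.pos_of_ne_zero fun h => by rw [h, zero_mul] at hmul; omega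
  have hmodEq {m : ℕ} (hm : m ∣ q ^ s - 1) : q ^ s ≡ 1 [MOD m] :=
    ((Nat.modEq_iff_dvd' hqs.le).mpr hm).symm
  have hper : q ^ s ≡ 1 [MOD n] := hmodEq (hmul ▸ dvd_mul_right n lam)
  have hlam : q.Coprime lam := coprime_of_pow_modEq_one hs0.ne' (hmodEq hdvd)
  have hincr {i : ℕ} (hqi : ¬ q ∣ i) (hi : i * lam < q ^ ((s + 1) / 2)) (j : ℕ) (hj : 0 < j)
      (hjs : j < s) : i < i * q ^ j % n :=
    lt_mul_pow_mod_of_mul_eq_pow_sub_one hq hmul (hqi ∘ hlam.dvd_of_dvd_mul_right) hi hj hjs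
  constructor
  · refine orderOf_natCast_zmod_eq hs0 hper fun j hj hjs => not_modEq_of_lt_mod ?_
    simpa only [one_mul] using
      hincr (Nat.dvd_one.not.mpr hq.ne') ((one_mul lam).trans_lt hlt) j hj hjs
  · intro i hqi hi
    have hgt := hincr hqi (mul_lt_pow_of_le_pow_div (by omega) hlam hqi hi)
    have hin : i < n := (hgt 1 one_pos hs).trans (Nat.mod_lt _ hn0)
    exact ⟨ncard_cyclotomicCoset hs0 hper fun j hj hjs => not_modEq_of_lt_mod (hgt j hj hjs),
      isLeast_cyclotomicCoset hs0 hper hin fun j hj hjs => (hgt j hj hjs).le⟩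

theorem stmt_18 (s : ℕ) (hs : 3 ≤ s) (lam : ℕ) (hdvd : lam ∣ 2 ^ s - 1)
    (hlt : lam < 2 ^ (s / 2)) (n : ℕ) (hn : n = (2 ^ s - 1) / lam) :
    orderOf (2 : ZMod n) = s ∧
    ∀ i : ℕ, Odd i → 1 ≤ i → i ≤ 2 ^ ((s + 1) / 2) / lam →
      (cycCoset n i).ncard = s ∧ cosetLeader n i = i := by
  obtain ⟨horder, hcoset⟩ := stmt_18_general one_lt_two (Nat.le_of_succ_le hs) hdvd
    (hlt.trans_le (Nat.pow_le_pow_right two_pos (by omega))) hn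
  exact ⟨mod_cast horder, fun i hi _ hle =>
    (hcoset i hi.not_two_dvd_nat hle).imp_right IsLeast.csInf_eq⟩
end
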